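/- arXiv:1208.0393 — 5 statements merged into one kernel-verified Lean document; each statement's English description precedes it below -/
import Mathlib

section
/- Let C be a code with |C| ≥ 2 and minimum distance δ, let α, β ∈ C with d(α,β) = δ, and let a ∈ Q. Then there exists x ∈ Aut(Γ) such that: (i) α^x is the constant vertex with value a in every coordinate, and (ii) for each γ ∈ Diff(α,β,C) there exists c ∈ Q with c ≠ a such that (γ^x) i = c for all i in the first δ coordinates of Fin m and (γ^x) i = a for all remaining coordinates. -/
/-!
Let `D = Diff(α,β)`, a set of `δ` coordinates, and let `S` consist of `α` and `Diff(α,β,C)`.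
Two distinct words of `S` are codewords that agree off `D`, so they are at distance at most `|D| = δ`;
minimality of `δ` forces them to differ at every coordinate of `D`
(`apply_ne_of_isMinDist`). Hence evaluation at any `i ∈ D` is injective on `S`, and after fixing
`j ∈ D` there is a permutation `e i` of `Q` with `e i (s i) = s j` for all `s ∈ S`
(`Equiv.Perm.exists_extending_pair`). Following `e i` by the transposition of `α j` and `a` sends `α i` to `a`
and `γ i` to a value that does not depend on `i ∈ D`. Off `D` the transposition of `α i` and `a`
suffices, and a permutation of the coordinates taking `D` to the first `δ` of them
finishes the normalisation.
-/

namespace CTC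

variable {m : ℕ} {Q : Type*}

/-- The automorphism of the Hamming graph `H(m,q)` given by the pair `(g, σ)`,
acting on a vertex `α` by `(α^x) i = (g (σ⁻¹ i)) (α (σ⁻¹ i))`. -/
def toPerm (g : Fin m → Equiv.Perm Q) (σ : Equiv.Perm (Fin m)) :
    Equiv.Perm (Fin m → Q) :=
  (Equiv.piCongrRight g).trans (σ.arrowCongr (Equiv.refl Q))

@[simp] lemma toPerm_apply (g : Fin m → Equiv.Perm Q) (σ : Equiv.Perm (Fin m))
    (α : Fin m → Q) (i : Fin m) :
    toPerm g σ α i = g (σ⁻¹ i) (α (σ⁻¹ i)) := rfl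

lemma toPerm_one : toPerm (fun _ : Fin m => (1 : Equiv.Perm Q)) 1 = 1 := by
  ext α i
  rfl

lemma toPerm_mul (g h : Fin m → Equiv.Perm Q) (σ τ : Equiv.Perm (Fin m)) :
    toPerm g σ * toPerm h τ = toPerm (fun j => g (τ j) * h j) (σ * τ) := by
  ext α i
  simp [toPerm_apply, Equiv.Perm.mul_apply]

lemma toPerm_inv (g : Fin m → Equiv.Perm Q) (σ : Equiv.Perm (Fin m)) :
    (toPerm g σ)⁻¹ = toPerm (fun i => (g (σ⁻¹ i))⁻¹) σ⁻¹ := by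
  rw [inv_eq_iff_mul_eq_one, toPerm_mul]
  have h1 : (fun j => g (σ⁻¹ j) * (g (σ⁻¹ j))⁻¹) = fun _ : Fin m => (1 : Equiv.Perm Q) := by
    funext j; simp
  have h2 : σ * σ⁻¹ = 1 := by simp
  rw [show (fun j => g ((σ⁻¹ : Equiv.Perm (Fin m)) j) * (g (σ⁻¹ j))⁻¹)
      = fun _ : Fin m => (1 : Equiv.Perm Q) from h1, h2, toPerm_one]

/-- The automorphism group of the Hamming graph, as a subgroup of the
permutations of the vertex set. -/
def AutG (m : ℕ) (Q : Type*) : Subgroup (Equiv.Perm (Fin m → Q)) where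
  carrier := {x | ∃ g σ, x = toPerm g σ}
  one_mem' := ⟨fun _ => 1, 1, toPerm_one.symm⟩
  mul_mem' := by
    rintro x y ⟨g, σ, rfl⟩ ⟨h, τ, rfl⟩
    exact ⟨_, _, toPerm_mul g h σ τ⟩
  inv_mem' := by
    rintro x ⟨g, σ, rfl⟩
    exact ⟨_, _, toPerm_inv g σ⟩

/-- The base group `B` of `Aut(Γ)`: the automorphisms `(g, σ)` with `σ = 1`. -/
def BaseG (m : ℕ) (Q : Type*) : Subgroup (Equiv.Perm (Fin m → Q)) where
  carrier := {x | ∃ g, x = toPerm g 1}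
  one_mem' := ⟨fun _ => 1, toPerm_one.symm⟩
  mul_mem' := by
    rintro x y ⟨g, rfl⟩ ⟨h, rfl⟩
    refine ⟨fun j => g j * h j, ?_⟩
    rw [toPerm_mul]
    simp
  inv_mem' := by
    rintro x ⟨g, rfl⟩
    refine ⟨fun i => (g i)⁻¹, ?_⟩
    rw [toPerm_inv]
    simp

/-- The projection `μ(X)` of a subgroup `X ≤ Aut(Γ)` to the group of
permutations of the coordinates. -/
def ProjGroup (X : Subgroup (Equiv.Perm (Fin m → Q))) : Subgroup (Equiv.Perm (Fin m)) where
  carrier := {σ | ∃ g, toPerm g σ ∈ X}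
  one_mem' := ⟨fun _ => 1, by rw [toPerm_one]; exact X.one_mem⟩
  mul_mem' := by
    rintro σ τ ⟨g, hg⟩ ⟨h, hh⟩
    exact ⟨fun j => g (τ j) * h j, by rw [← toPerm_mul]; exact X.mul_mem hg hh⟩
  inv_mem' := by
    rintro σ ⟨g, hg⟩
    exact ⟨fun i => (g (σ⁻¹ i))⁻¹, by rw [← toPerm_inv]; exact X.inv_mem hg⟩

variable [DecidableEq Q]

/-- `d(γ, C)`: the distance from a vertex `γ` to the code `C`. -/
noncomputable def distTo (C : Set (Fin m → Q)) (γ : Fin m → Q) : ℕ :=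
  sInf {d | ∃ β ∈ C, hammingDist γ β = d}

/-- `C_i`: the set of vertices at distance `i` from the code `C`. -/
def cell (C : Set (Fin m → Q)) (i : ℕ) : Set (Fin m → Q) :=
  {γ | distTo C γ = i}

/-- The covering radius `ρ` of the code `C`. -/
noncomputable def covRad (C : Set (Fin m → Q)) : ℕ :=
  sSup {e | ∃ γ, distTo C γ = e}

/-- `S` is a single orbit of the subgroup `X`. -/
def IsOrbitOf (X : Subgroup (Equiv.Perm (Fin m → Q))) (S : Set (Fin m → Q)) : Prop :=
  ∃ γ, S = {β | ∃ x ∈ X, x γ = β}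

/-- `C` is `(X,s)`-neighbour transitive: `C_i` is an `X`-orbit for `0 ≤ i ≤ s`. -/
def IsNT (C : Set (Fin m → Q)) (X : Subgroup (Equiv.Perm (Fin m → Q))) (s : ℕ) : Prop :=
  ∀ i ≤ s, IsOrbitOf X (cell C i)

/-- `C` is `X`-completely transitive: `C_i` is an `X`-orbit for `0 ≤ i ≤ ρ`. -/
def IsCT (C : Set (Fin m → Q)) (X : Subgroup (Equiv.Perm (Fin m → Q))) : Prop :=
  IsNT C X (covRad C)

/-- `δ` is the minimum distance of the code `C`. -/
def IsMinDist (C : Set (Fin m → Q)) (δ : ℕ) : Prop :=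
  IsLeast {d | ∃ α ∈ C, ∃ β ∈ C, α ≠ β ∧ hammingDist α β = d} δ

/-- The repetition code `Rep(m,q)`: the set of constant vertices. -/
def RepCode (m : ℕ) (Q : Type*) : Set (Fin m → Q) := {α | ∃ a, α = fun _ => a}

/-- Two codes are equivalent if one is the image of the other under an
automorphism of the Hamming graph. -/
def CodeEquiv (C C' : Set (Fin m → Q)) : Prop :=
  ∃ x ∈ AutG m Q, ⇑x '' C = C'

/-- `Γ_k(γ)`: the set of vertices at Hamming distance `k` from `γ`. -/
def sphere (γ : Fin m → Q) (k : ℕ) : Set (Fin m → Q) := {β | hammingDist γ β = k}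

/-- `C` is `s`-regular. -/
def IsSReg (C : Set (Fin m → Q)) (s : ℕ) : Prop :=
  ∀ i ≤ s, ∀ k ≤ m, ∀ γ₁ ∈ cell C i, ∀ γ₂ ∈ cell C i,
    (sphere γ₁ k ∩ C).ncard = (sphere γ₂ k ∩ C).ncard

/-- `C` is completely regular. -/
def IsCR (C : Set (Fin m → Q)) : Prop := IsSReg C (covRad C)

end CTC

namespace CTC

/-- `Diff(α,β)`: the set of coordinates where `α` and `β` differ. -/
def DiffSet {m : ℕ} {Q : Type*} (α β : Fin m → Q) : Set (Fin m) := {i | α i ≠ β i}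

/-- `Diff(α,β,C)`: the codewords `γ ∈ C` with `Diff(α,γ) = Diff(α,β)`. -/
def DiffC {m : ℕ} {Q : Type*} (α β : Fin m → Q) (C : Set (Fin m → Q)) :
    Set (Fin m → Q) := {γ ∈ C | DiffSet α γ = DiffSet α β}

end CTC

namespace CTC

lemma exists_perm_lt_card_iff {m : ℕ} (D : Finset (Fin m)) :
    ∃ σ : Equiv.Perm (Fin m), ∀ i, (σ i : ℕ) < D.card ↔ i ∈ D := by
  have hle : D.card ≤ m := by simpa using D.card_le_univ
  have hcard : Fintype.card {i // i ∈ D} = Fintype.card {i : Fin m // (i : ℕ) < D.card} := by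
    rw [Fintype.card_coe, Fintype.card_subtype, Fin.card_filter_val_lt, min_eq_right hle]
  let e := Fintype.equivOfCardEq hcard
  refine ⟨e.extendSubtype, fun i => ⟨fun h => ?_, fun h => e.extendSubtype_mem i h⟩⟩
  by_contra hi
  exact e.extendSubtype_not_mem i hi h

/-- Distinct codewords that agree off a set of `δ` coordinates differ at each of these
coordinates, because otherwise their distance would be less than `δ`. -/
lemma apply_ne_of_isMinDist {m : ℕ} {Q : Type*} [DecidableEq Q] {C : Set (Fin m → Q)}
    {D : Finset (Fin m)} (hδ : IsMinDist C D.card) {s t : Fin m → Q} (hs : s ∈ C) (ht : t ∈ C)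
    (hst : s ≠ t) (hoff : ∀ i ∉ D, s i = t i) {i : Fin m} (hi : i ∈ D) : s i ≠ t i := by
  have hle : D.card ≤ hammingDist s t := hδ.2 ⟨s, hs, t, ht, hst, rfl⟩
  have hsub : (Finset.univ.filter fun k => s k ≠ t k) ⊆ D := by
    intro k hk
    by_contra hkD
    exact (Finset.mem_filter.1 hk).2 (hoff k hkD)
  have hmem : i ∈ Finset.univ.filter fun k => s k ≠ t k := by
    rw [Finset.eq_of_subset_of_card_le hsub hle]
    exact hi
  exact (Finset.mem_filter.1 hmem).2

end CTC

open CTC in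
/-- Lemma 2.2: any pair of codewords at minimum distance can be
moved by an automorphism to a normalised position. -/
theorem statement2 {m : ℕ} {Q : Type*} [Fintype Q] [DecidableEq Q]
    (hm : 2 ≤ m) (hq2 : 2 ≤ Fintype.card Q)
    (C : Set (Fin m → Q)) (hC : 2 ≤ C.ncard) (δ : ℕ) (hδ : IsMinDist C δ)
    (α β : Fin m → Q) (hα : α ∈ C) (hβ : β ∈ C)
    (hd : hammingDist α β = δ) (a : Q) :
    ∃ x ∈ AutG m Q, (⇑x α = fun _ => a) ∧
      ∀ γ ∈ DiffC α β C, ∃ c : Q, c ≠ a ∧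
        (∀ i : Fin m, (i : ℕ) < δ → x γ i = c) ∧
        (∀ i : Fin m, δ ≤ (i : ℕ) → x γ i = a) := by
    classical
  set D : Finset (Fin m) := Finset.univ.filter fun i => α i ≠ β i with hD
  have hmemD : ∀ i, i ∈ D ↔ α i ≠ β i := fun i => by simp [hD]
  obtain rfl : D.card = δ := hd
  have hpos : 0 < D.card := by
    obtain ⟨s, -, t, -, hst, h⟩ := hδ.1
    exact h ▸ hammingDist_pos.2 hst
  obtain ⟨j, hj⟩ := Finset.card_pos.1 hpos
  have hdiff : ∀ γ ∈ DiffC α β C, ∀ i, α i ≠ γ i ↔ i ∈ D := fun γ hγ i =>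
    (Set.ext_iff.1 hγ.2 i).trans (hmemD i).symm
  let S : Set (Fin m → Q) := insert α (DiffC α β C)
  have hSC : ∀ s ∈ S, s ∈ C := by
    rintro s (rfl | hs)
    exacts [hα, hs.1]
  have hSoff : ∀ s ∈ S, ∀ i ∉ D, α i = s i := by
    rintro s (rfl | hs) i hi
    · rfl
    · exact not_not.1 (mt (hdiff s hs i).1 hi)
  have hinj : ∀ i ∈ D, Function.Injective fun s : S => s.1 i := by
    intro i hi s t hst
    by_contra hne
    exact apply_ne_of_isMinDist hδ (hSC s s.2) (hSC t t.2) (fun h => hne (Subtype.ext h))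
      (fun k hk => (hSoff s s.2 k hk).symm.trans (hSoff t t.2 k hk)) hi hst
  have hex : ∀ i, ∃ e : Equiv.Perm Q, i ∈ D → ∀ s : S, e (s.1 i) = s.1 j := by
    intro i
    by_cases hi : i ∈ D
    · obtain ⟨e, he⟩ := Equiv.Perm.exists_extending_pair _ _ (hinj i hi) (hinj j hj)
      exact ⟨e, fun _ => he⟩
    · exact ⟨1, fun h => absurd h hi⟩
  choose e he using hex
  obtain ⟨σ, hσ⟩ := exists_perm_lt_card_iff D
  have hσ' : ∀ i : Fin m, (i : ℕ) < D.card ↔ σ⁻¹ i ∈ D := fun i => by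
    simp [← hσ]
  let g : Fin m → Equiv.Perm Q := fun i =>
    if i ∈ D then (e i).trans (Equiv.swap (α j) a) else Equiv.swap (α i) a
  have hg : ∀ i ∈ D, ∀ s ∈ S, g i (s i) = Equiv.swap (α j) a (s j) := by
    intro i hi s hs
    simp [g, hi, he i hi ⟨s, hs⟩]
  have hg' : ∀ i ∉ D, ∀ s ∈ S, g i (s i) = a := by
    intro i hi s hs
    simp [g, hi, ← hSoff s hs i hi]
  refine ⟨toPerm g σ, ⟨g, σ, rfl⟩, ?_, fun γ hγ => ⟨Equiv.swap (α j) a (γ j), ?_, ?_, ?_⟩⟩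
  · funext i
    have hαS : α ∈ S := Set.mem_insert _ _
    rw [toPerm_apply]
    by_cases hi : σ⁻¹ i ∈ D
    · rw [hg _ hi α hαS, Equiv.swap_apply_left]
    · exact hg' _ hi α hαS
  · intro h
    rw [Equiv.swap_apply_eq_iff, Equiv.swap_apply_right] at h
    exact (hdiff γ hγ j).2 hj h.symm
  · intro i hi
    exact hg _ ((hσ' i).1 hi) γ (Set.mem_insert_of_mem _ hγ)
  · intro i hi
    exact hg' _ (fun h => hi.not_gt ((hσ' i).2 h)) γ (Set.mem_insert_of_mem _ hγ)
end

section
/- Let C be an (X,s)-neighbour transitive code with |C| ≥ 2 and minimum distance δ, let α ∈ C, and let i be an integer with i ≤ min(s, ⌊(δ−1)/2⌋). Then the stabilizer X_α = {x ∈ X : α^x = α} maps Γ_i(α) into itself and acts transitively on Γ_i(α); moreover, the set of permutations {σ : (g,σ) ∈ X_α} acts transitively on the set of i-element subsets of Fin m. -/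
namespace CTC

section

variable {m : ℕ} {Q : Type*}

lemma exists_mem_orbit {X : Subgroup (Equiv.Perm (Fin m → Q))} {S : Set (Fin m → Q)}
    (h : IsOrbitOf X S) {a b : Fin m → Q} (ha : a ∈ S) (hb : b ∈ S) :
    ∃ x ∈ X, x a = b := by
  obtain ⟨c, rfl⟩ := h
  obtain ⟨x, hx, rfl⟩ := ha
  obtain ⟨y, hy, rfl⟩ := hb
  exact ⟨y * x⁻¹, X.mul_mem hy (X.inv_mem hx), by simp [Equiv.Perm.mul_apply]⟩

lemma apply_mem_orbit {X : Subgroup (Equiv.Perm (Fin m → Q))} {S : Set (Fin m → Q)}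
    (h : IsOrbitOf X S) {x : Equiv.Perm (Fin m → Q)} (hx : x ∈ X) {a : Fin m → Q}
    (ha : a ∈ S) : x a ∈ S := by
  obtain ⟨c, rfl⟩ := h
  obtain ⟨y, hy, rfl⟩ := ha
  exact ⟨x * y, X.mul_mem hx hy, rfl⟩

variable [DecidableEq Q]

/-- The set of coordinates where two vertices differ is moved by the coordinate permutation `σ`. -/
lemma filter_toPerm_ne (g : Fin m → Equiv.Perm Q) (σ : Equiv.Perm (Fin m)) (a b : Fin m → Q) :
    (Finset.univ.filter fun k => toPerm g σ a k ≠ toPerm g σ b k) =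
      (Finset.univ.filter fun k => a k ≠ b k).image σ := by
  ext k
  simp only [toPerm_apply, Finset.mem_filter, Finset.mem_univ, true_and, Finset.mem_image, ne_eq,
    EmbeddingLike.apply_eq_iff_eq]
  constructor
  · intro h
    exact ⟨σ⁻¹ k, h, by simp⟩
  · rintro ⟨j, hj, rfl⟩
    simpa using hj

lemma hammingDist_toPerm (g : Fin m → Equiv.Perm Q) (σ : Equiv.Perm (Fin m)) (a b : Fin m → Q) :
    hammingDist (toPerm g σ a) (toPerm g σ b) = hammingDist a b := by
  unfold hammingDist
  rw [filter_toPerm_ne, Finset.card_image_of_injective _ σ.injective]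

lemma hammingDist_of_mem_AutG {x : Equiv.Perm (Fin m → Q)} (hx : x ∈ AutG m Q)
    (a b : Fin m → Q) : hammingDist (x a) (x b) = hammingDist a b := by
  obtain ⟨g, σ, rfl⟩ := hx
  exact hammingDist_toPerm g σ a b

/-- Nonemptiness excludes the junk value `sInf ∅ = 0`. -/
lemma cell_zero {C : Set (Fin m → Q)} (hC : C.Nonempty) : cell C 0 = C := by
  ext γ
  obtain ⟨β, hβ⟩ := hC
  have hne : {d | ∃ β ∈ C, hammingDist γ β = d} ≠ ∅ :=
    Set.Nonempty.ne_empty ⟨_, β, hβ, rfl⟩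
  simp only [cell, distTo, Set.mem_ofPred_eq, Nat.sInf_eq_zero, hne, or_false,
    hammingDist_eq_zero]
  constructor
  · rintro ⟨β, hβ, rfl⟩
    exact hβ
  · exact fun h => ⟨γ, h, rfl⟩

/-- Within half the minimum distance the nearest codeword is unique. -/
lemma eq_of_two_mul_lt {C : Set (Fin m → Q)} {δ i : ℕ} (hδ : IsMinDist C δ) (hi : 2 * i < δ)
    {a b ν : Fin m → Q} (ha : a ∈ C) (hb : b ∈ C) (h₁ : hammingDist a ν ≤ i)
    (h₂ : hammingDist b ν ≤ i) : a = b := by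
  by_contra hab
  have := hδ.2 ⟨a, ha, b, hb, hab, rfl⟩
  have := hammingDist_triangle_right a b ν
  omega

lemma IsMinDist.pos {C : Set (Fin m → Q)} {δ : ℕ} (hδ : IsMinDist C δ) : 0 < δ := by
  obtain ⟨⟨a, -, b, -, hab, rfl⟩, -⟩ := hδ
  exact hammingDist_pos.2 hab

lemma sphere_subset_cell {C : Set (Fin m → Q)} {δ i : ℕ} (hδ : IsMinDist C δ) (hi : 2 * i < δ)
    {α : Fin m → Q} (hα : α ∈ C) : sphere α i ⊆ cell C i := by
  intro ν hν
  have hν' : hammingDist α ν = i := hν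
  refine IsLeast.csInf_eq ⟨⟨α, hα, by rw [hammingDist_comm, hν']⟩, ?_⟩
  rintro _ ⟨β, hβ, rfl⟩
  by_contra! hlt
  have hβ' : hammingDist β ν < i := by rwa [hammingDist_comm]
  have := eq_of_two_mul_lt hδ hi hα hβ hν'.le hβ'.le
  subst this
  omega

lemma exists_filter_ne_eq [Nontrivial Q] (α : Fin m → Q) (I : Finset (Fin m)) :
    ∃ ν : Fin m → Q, (Finset.univ.filter fun k => α k ≠ ν k) = I := by
  choose f hf using fun a : Q => exists_ne a
  refine ⟨fun k => if k ∈ I then f (α k) else α k, ?_⟩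
  ext k
  by_cases hk : k ∈ I <;> simp [hk, (hf (α k)).symm]

end

end CTC

open CTC in
/-- Proposition 2.5: for an `(X,s)`-neighbour transitive code and
`i ≤ min(s, ⌊(δ-1)/2⌋)`, the stabiliser `X_α` fixes `Γ_i(α)` setwise, acts
transitively on it, and the induced permutations act transitively on the
`i`-subsets of `Fin m`. -/
theorem statement4 {m : ℕ} {Q : Type*} [Fintype Q] [DecidableEq Q]
    (hm : 2 ≤ m) (hq2 : 2 ≤ Fintype.card Q)
    (C : Set (Fin m → Q)) (hC : 2 ≤ C.ncard)
    (X : Subgroup (Equiv.Perm (Fin m → Q))) (hX : X ≤ AutG m Q)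
    (s : ℕ) (hs : s ≤ covRad C) (hNT : IsNT C X s)
    (δ : ℕ) (hδ : IsMinDist C δ)
    (α : Fin m → Q) (hα : α ∈ C)
    (i : ℕ) (hi : i ≤ min s ((δ - 1) / 2)) :
    (∀ x : Equiv.Perm (Fin m → Q), x ∈ X → x α = α →
        ∀ ν ∈ sphere α i, x ν ∈ sphere α i) ∧
    (∀ ν₁ ∈ sphere α i, ∀ ν₂ ∈ sphere α i, ∃ x ∈ X, x α = α ∧ x ν₁ = ν₂) ∧
    (∀ I J : Finset (Fin m), I.card = i → J.card = i →
      ∃ (g : Fin m → Equiv.Perm Q) (σ : Equiv.Perm (Fin m)),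
        toPerm g σ ∈ X ∧ toPerm g σ α = α ∧ I.image σ = J) := by
  have : Nontrivial Q := Fintype.one_lt_card_iff_nontrivial.1 hq2
  have hpos := hδ.pos
  have his : i ≤ s := hi.trans (min_le_left _ _)
  have hi2 : 2 * i < δ := by
    have := hi.trans (min_le_right _ _)
    omega
  have horb : IsOrbitOf X C := by
    simpa only [cell_zero ⟨α, hα⟩] using hNT 0 (Nat.zero_le s)
  have htrans : ∀ ν₁ ∈ sphere α i, ∀ ν₂ ∈ sphere α i, ∃ x ∈ X, x α = α ∧ x ν₁ = ν₂ := by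
    intro ν₁ h₁ ν₂ h₂
    obtain ⟨x, hx, rfl⟩ := exists_mem_orbit (hNT i his)
      (sphere_subset_cell hδ hi2 hα h₁) (sphere_subset_cell hδ hi2 hα h₂)
    refine ⟨x, hx, eq_of_two_mul_lt hδ hi2 (apply_mem_orbit horb hx hα) hα ?_ (le_of_eq h₂), rfl⟩
    rw [hammingDist_of_mem_AutG (hX hx)]
    exact le_of_eq h₁
  refine ⟨?_, htrans, ?_⟩
  · intro x hx hxα ν hν
    have h := hammingDist_of_mem_AutG (hX hx) α ν
    rw [hxα] at h
    exact h.trans hν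
  · intro I J hI hJ
    obtain ⟨ν₁, h₁⟩ := exists_filter_ne_eq α I
    obtain ⟨ν₂, h₂⟩ := exists_filter_ne_eq α J
    obtain ⟨x, hx, hxα, hxν⟩ := htrans ν₁ ((congrArg Finset.card h₁).trans hI)
      ν₂ ((congrArg Finset.card h₂).trans hJ)
    obtain ⟨g, σ, rfl⟩ := hX hx
    refine ⟨g, σ, hx, hxα, ?_⟩
    rw [← h₁, ← h₂, ← filter_toPerm_ne, hxα, hxν]
end

section
/- Let C be a nonempty X-completely transitive code in H(m,q). Then q^m ≤ |X| · (m + 1). Moreover, if |X| ≤ m! and m ≥ 5, then q ≤ m − 2. -/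
namespace CTC

lemma distTo_le {m : ℕ} {Q : Type*} [DecidableEq Q] {C : Set (Fin m → Q)} (hne : C.Nonempty)
    (γ : Fin m → Q) : distTo C γ ≤ m := by
  obtain ⟨β, hβ⟩ := hne
  calc distTo C γ ≤ hammingDist γ β := Nat.sInf_le ⟨β, hβ, rfl⟩
    _ ≤ m := by simpa using hammingDist_le_card_fintype (x := γ) (y := β)

lemma distTo_le_covRad {m : ℕ} {Q : Type*} [DecidableEq Q] {C : Set (Fin m → Q)}
    (hne : C.Nonempty) (γ : Fin m → Q) : distTo C γ ≤ covRad C := by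
  refine le_csSup ⟨m, ?_⟩ ⟨γ, rfl⟩
  rintro _ ⟨δ, rfl⟩
  exact distTo_le hne δ

lemma IsOrbitOf.ncard_le {m : ℕ} {Q : Type*} [Finite Q]
    {X : Subgroup (Equiv.Perm (Fin m → Q))} {S : Set (Fin m → Q)} (h : IsOrbitOf X S) :
    S.ncard ≤ Nat.card X := by
  obtain ⟨γ, rfl⟩ := h
  have hS : {β | ∃ x ∈ X, x γ = β} = (fun x : Equiv.Perm (Fin m → Q) => x γ) '' (X : Set _) := rfl
  rw [hS]
  exact Set.ncard_image_le (Set.toFinite _)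

/-- The bound `(m + 1)! < (m - 1) ^ m` for `m ≥ 5`, with `m = k + 1`. -/
lemma factorial_lt_pow {k : ℕ} (hk : 4 ≤ k) : (k + 2).factorial < k ^ (k + 1) := by
  induction k, hk using Nat.le_induction with
  | base => decide
  | succ k hk ih =>
    -- the first two terms of the binomial expansion of `(k + 1) ^ (k + 1)`
    have hbern : 2 * k ^ (k + 1) ≤ (k + 1) ^ (k + 1) := by
      have h : ∀ n : ℕ, k ^ (n + 1) + (n + 1) * k ^ n ≤ (k + 1) ^ (n + 1) := by
        intro n
        induction n with
        | zero => simp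
        | succ n ihn =>
          have h2 := Nat.mul_le_mul_right (k + 1) ihn
          have h3 : 0 ≤ (n + 1) * k ^ n := Nat.zero_le _
          calc _ ≤ (k ^ (n + 1) + (n + 1) * k ^ n) * (k + 1) := by ring_nf; nlinarith
            _ ≤ _ := by rw [pow_succ (k + 1) (n + 1)]; exact h2
      have h1 := h k
      have h4 : k ^ (k + 1) = k * k ^ k := by ring
      nlinarith [Nat.zero_le (k ^ k)]
    calc (k + 1 + 2).factorial = (k + 3) * (k + 2).factorial := Nat.factorial_succ (k + 2)
      _ < (k + 3) * k ^ (k + 1) := by gcongr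
      _ ≤ (k + 1) * (2 * k ^ (k + 1)) := by nlinarith [Nat.zero_le (k ^ (k + 1))]
      _ ≤ (k + 1) * (k + 1) ^ (k + 1) := by gcongr
      _ = (k + 1) ^ (k + 1 + 1) := by ring

end CTC

open CTC in
/-- Lemma 2.9: for a nonempty `X`-completely transitive code,
`q^m ≤ |X|·(m+1)`; moreover if `|X| ≤ m!` and `m ≥ 5` then `q ≤ m - 2`. -/
theorem statement8 {m q : ℕ} {Q : Type*} [Fintype Q] [DecidableEq Q]
    (hm : 2 ≤ m) (hq2 : 2 ≤ q) (hcard : Fintype.card Q = q)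
    (C : Set (Fin m → Q)) (hne : C.Nonempty)
    (X : Subgroup (Equiv.Perm (Fin m → Q))) (hX : X ≤ AutG m Q)
    (hCT : IsCT C X) :
    q ^ m ≤ Nat.card X * (m + 1) ∧
    (Nat.card X ≤ Nat.factorial m → 5 ≤ m → q ≤ m - 2) := by
  have hbound : q ^ m ≤ Nat.card X * (m + 1) := by
    have h := Finset.card_le_mul_card_image_of_maps_to (s := (Finset.univ : Finset (Fin m → Q)))
      (t := Finset.range (m + 1)) (f := distTo C)
      (fun γ _ => Finset.mem_coe.2 (Finset.mem_range.2 (Nat.lt_succ_of_le (distTo_le hne γ))))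
      (Nat.card X) ?_
    · simpa [hcard] using h
    · intro i _
      rw [← Set.ncard_coe_finset]
      have hfib : ((Finset.univ.filter (fun γ => distTo C γ = i) : Finset (Fin m → Q)) :
          Set (Fin m → Q)) = cell C i := by
        ext γ; simp [cell]
      rw [hfib]
      -- the cells beyond the covering radius are empty
      rcases (cell C i).eq_empty_or_nonempty with h0 | ⟨γ, hγ⟩
      · simp [h0]
      · refine (hCT i ?_).ncard_le
        rw [← show distTo C γ = i from hγ]
        exact distTo_le_covRad hne γ
  refine ⟨hbound, fun hXm hm5 => ?_⟩
  by_contra! hlt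
  obtain ⟨k, rfl⟩ : ∃ k, m = k + 1 := ⟨m - 1, by omega⟩
  have hqk : k ≤ q := by omega
  have h1 : (k + 2).factorial < k ^ (k + 1) := factorial_lt_pow (by omega)
  have h2 : k ^ (k + 1) ≤ q ^ (k + 1) := Nat.pow_le_pow_left hqk _
  have h3 : Nat.card X * (k + 1 + 1) ≤ (k + 1).factorial * (k + 1 + 1) :=
    Nat.mul_le_mul_right _ hXm
  have h4 : (k + 2).factorial = (k + 2) * (k + 1).factorial := Nat.factorial_succ (k + 1)
  nlinarith
end

section
/- Let C be a 1-regular code in H(m,q) with |C| = 2 and minimum distance δ. Then δ = 1 or δ = m, and q = 2. Moreover, if δ = m then C is equivalent to the binary repetition code Rep(m,2). -/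
namespace CTC

lemma hammingDist_update {m : ℕ} {Q : Type*} [DecidableEq Q] (α β : Fin m → Q) (i : Fin m)
    (a : Q) :
    hammingDist (Function.update α i a) β + (if α i ≠ β i then 1 else 0)
      = hammingDist α β + (if a ≠ β i then 1 else 0) := by
  have key : ∀ γ : Fin m → Q, hammingDist γ β
      = (if γ i ≠ β i then 1 else 0)
        + ∑ j ∈ Finset.univ.erase i, (if γ j ≠ β j then 1 else 0) := by
    intro γ
    rw [Finset.add_sum_erase _ (fun j => if γ j ≠ β j then 1 else 0) (Finset.mem_univ i),
      ← Finset.card_filter]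
    rfl
  have hs : ∑ j ∈ Finset.univ.erase i, (if Function.update α i a j ≠ β j then 1 else 0)
      = ∑ j ∈ Finset.univ.erase i, (if α j ≠ β j then 1 else 0) := by
    refine Finset.sum_congr rfl fun j hj => ?_
    rw [Function.update_of_ne (Finset.ne_of_mem_erase hj)]
  rw [key, key α, hs, Function.update_self]
  omega

lemma mem_cell_one {m : ℕ} {Q : Type*} [DecidableEq Q] {α β γ : Fin m → Q}
    (hα : hammingDist γ α = 1) (hβ : 1 ≤ hammingDist γ β) :
    γ ∈ cell ({α, β} : Set (Fin m → Q)) 1 := by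
  refine IsLeast.csInf_eq ⟨⟨α, by simp, hα⟩, ?_⟩
  rintro d ⟨x, hx, rfl⟩
  rcases hx with rfl | rfl
  · exact hα.ge
  · exact hβ

/-- All vertices adjacent to the codeword `α` and different from the codeword `β` have the same
distance to `β`: a sphere around such a vertex of radius `k ≠ 1` can meet the code only in `β`. -/
lemma dist_eq_of_reg {m : ℕ} {Q : Type*} [DecidableEq Q] {α β γ₁ γ₂ : Fin m → Q}
    (hreg : IsSReg ({α, β} : Set (Fin m → Q)) 1)
    (h₁ : hammingDist γ₁ α = 1) (h₂ : hammingDist γ₂ α = 1)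
    (k₁ : 1 ≤ hammingDist γ₁ β) (k₂ : 1 ≤ hammingDist γ₂ β) :
    hammingDist γ₁ β = hammingDist γ₂ β := by
  have aux : ∀ δ₁ δ₂ : Fin m → Q, hammingDist δ₁ α = 1 → hammingDist δ₂ α = 1 →
      1 ≤ hammingDist δ₁ β → 1 ≤ hammingDist δ₂ β → hammingDist δ₁ β ≠ 1 →
      hammingDist δ₁ β = hammingDist δ₂ β := by
    intro δ₁ δ₂ h₁ h₂ k₁ k₂ hk
    have hle : hammingDist δ₁ β ≤ m := by
      simpa using hammingDist_le_card_fintype (x := δ₁) (y := β)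
    have he := hreg 1 le_rfl _ hle δ₁ (mem_cell_one h₁ k₁) δ₂ (mem_cell_one h₂ k₂)
    have hfin : ∀ γ k, (sphere γ k ∩ ({α, β} : Set (Fin m → Q))).Finite := fun γ k =>
      (Set.toFinite {α, β}).subset Set.inter_subset_right
    have hpos : 0 < (sphere δ₁ (hammingDist δ₁ β) ∩ ({α, β} : Set (Fin m → Q))).ncard :=
      (Set.ncard_pos (hfin _ _)).2 ⟨β, rfl, by simp⟩
    rw [he, Set.ncard_pos (hfin _ _)] at hpos
    obtain ⟨x, hx, rfl | rfl⟩ := hpos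
    · exact absurd (hx.symm.trans h₂) hk
    · exact hx.symm
  by_cases e₁ : hammingDist γ₁ β = 1
  · by_cases e₂ : hammingDist γ₂ β = 1
    · rw [e₁, e₂]
    · exact (aux γ₂ γ₁ h₂ h₁ k₂ k₁ e₂).symm
  · exact aux γ₁ γ₂ h₁ h₂ k₁ k₂ e₁

lemma hammingDist_update_self {m : ℕ} {Q : Type*} [DecidableEq Q] {α : Fin m → Q} {i : Fin m}
    {a : Q} (ha : a ≠ α i) : hammingDist (Function.update α i a) α = 1 := by
  simpa [ha] using hammingDist_update α α i a

/-- Over a two-letter alphabet, complementary words form a code equivalent to the repetition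
code. -/
lemma codeEquiv_rep {m : ℕ} {Q : Type*} [Fintype Q] [DecidableEq Q]
    (hQ : Fintype.card Q = 2) {α β : Fin m → Q} (h : ∀ i, α i ≠ β i) :
    CodeEquiv ({α, β} : Set (Fin m → Q)) (RepCode m Q) := by
  obtain ⟨a, b, hab, hu⟩ := Finset.card_eq_two.1 (Finset.card_univ.trans hQ)
  have hcov : ∀ x : Q, x = a ∨ x = b := fun x => by
    simpa [hu] using Finset.mem_univ x
  refine ⟨toPerm (fun i => Equiv.swap (α i) a) 1, ⟨_, _, rfl⟩, ?_⟩
  have hα : toPerm (fun i => Equiv.swap (α i) a) 1 α = fun _ => a := by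
    ext i; simp
  have hβ : toPerm (fun i => Equiv.swap (α i) a) 1 β = fun _ => b := by
    ext i
    refine (hcov _).resolve_left fun hi => h i ?_
    have hi' : Equiv.swap (α i) a (β i) = Equiv.swap (α i) a (α i) := by
      rw [Equiv.swap_apply_left]; exact hi
    exact (Equiv.injective _ hi').symm
  rw [Set.image_pair, hα, hβ]
  ext γ
  constructor
  · rintro (rfl | rfl)
    · exact ⟨a, rfl⟩
    · exact ⟨b, rfl⟩
  · rintro ⟨c, rfl⟩
    rcases hcov c with rfl | rfl <;> simp

end CTC

open CTC in
/-- Lemma 2.12: a `1`-regular code of size `2` has `δ = 1` or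
`δ = m` and `q = 2`; if `δ = m` it is equivalent to `Rep(m,2)`. -/
theorem statement10 {m q : ℕ} {Q : Type*} [Fintype Q] [DecidableEq Q]
    (hm : 2 ≤ m) (hq2 : 2 ≤ q) (hcard : Fintype.card Q = q)
    (C : Set (Fin m → Q)) (hC : C.ncard = 2)
    (δ : ℕ) (hδ : IsMinDist C δ) (hreg : IsSReg C 1) :
    (δ = 1 ∨ δ = m) ∧ q = 2 ∧ (δ = m → CodeEquiv C (RepCode m Q)) := by
  obtain ⟨α, β, hne, rfl⟩ := Set.ncard_eq_two.1 hC
  have hd : hammingDist α β = δ := by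
    obtain ⟨x, hx, y, hy, hxy, h⟩ := hδ.1
    rcases hx with rfl | rfl <;> rcases hy with rfl | rfl
    · exact absurd rfl hxy
    · exact h
    · rw [hammingDist_comm]; exact h
    · exact absurd rfl hxy
  obtain ⟨i, hi⟩ := Function.ne_iff.1 hne
  have hpos : 0 < δ := hd ▸ hammingDist_pos.2 hne
  have hcard' : ∀ S : Finset Q, S.card < q → ∃ c, c ∉ S := fun S hS => by
    by_contra! hall
    have := Finset.card_le_card (fun c _ => hall c : Finset.univ ⊆ S)
    rw [Finset.card_univ, hcard] at this
    omega
  have hdown : hammingDist (Function.update α i (β i)) β + 1 = δ := by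
    simpa [hi, hd] using hammingDist_update α β i (β i)
  have hdown1 : hammingDist (Function.update α i (β i)) α = 1 := hammingDist_update_self hi.symm
  have hup : ∀ j, α j = β j → ∃ γ : Fin m → Q, hammingDist γ α = 1 ∧ hammingDist γ β = δ + 1 := by
    intro j hj
    obtain ⟨c, hc⟩ := hcard' {α j} (by simp; omega)
    rw [Finset.mem_singleton] at hc
    refine ⟨Function.update α j c, hammingDist_update_self hc, ?_⟩
    have h := hammingDist_update α β j c
    rw [hj] at hc
    simpa [hj, hc, hd] using h
  have hagree : δ ≠ m → ∃ j, α j = β j := by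
    intro hlt
    by_contra! hall
    apply hlt
    rw [← hd]
    simp [hammingDist, hall]
  have h1m : δ = 1 ∨ δ = m := by
    by_contra! hcon
    obtain ⟨j, hj⟩ := hagree hcon.2
    obtain ⟨γ, g1, g2⟩ := hup j hj
    have := dist_eq_of_reg hreg g1 hdown1 (by omega) (by omega)
    omega
  have hq : q = 2 := by
    by_contra hq
    obtain ⟨c, hc⟩ := hcard' {α i, β i} (Finset.card_le_two.trans_lt (by omega))
    simp only [Finset.mem_insert, Finset.mem_singleton, not_or] at hc
    have hmid : hammingDist (Function.update α i c) β = δ := by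
      simpa [hi, hc.2, hd] using hammingDist_update α β i c
    have hmid1 := hammingDist_update_self hc.1
    by_cases h1 : δ = 1
    · obtain ⟨j, hj⟩ := hagree (by omega)
      obtain ⟨γ, g1, g2⟩ := hup j hj
      have := dist_eq_of_reg hreg g1 hmid1 (by omega) (by omega)
      omega
    · have := dist_eq_of_reg hreg hmid1 hdown1 (by omega) (by omega)
      omega
  refine ⟨h1m, hq, fun hδm => codeEquiv_rep (hcard.trans hq) fun j hj => ?_⟩
  -- An agreeing coordinate would produce a vertex at distance `m + 1` from `β`.
  obtain ⟨γ, -, g2⟩ := hup j hj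
  have : hammingDist γ β ≤ m := by
    simpa using hammingDist_le_card_fintype (x := γ) (y := β)
  omega
end

section
/- Let C be a completely regular code in H(m,2) with |C| ≥ 2 and minimum distance δ satisfying 5 ≤ δ < m. Then |C| ≥ m + 1. -/
/-- **Fisher's inequality**: if every point lies in `r` blocks and every two distinct points lie
in `l < r` common blocks, there are at least as many blocks as points. The Gram matrix of the
incidence vectors of the points is `(r - l) I + l J`, which is positive definite. -/
lemma fisher {ι β : Type*} [Fintype ι] [DecidableEq ι] (B : Finset β) (inc : β → ι → Prop)
    [∀ b i, Decidable (inc b i)] (r l : ℕ) (hr : ∀ i, (B.filter fun b => inc b i).card = r)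
    (hl : ∀ i j, i ≠ j → (B.filter fun b => inc b i ∧ inc b j).card = l) (hlr : l < r) :
    Fintype.card ι ≤ B.card := by
  have gram : ∀ i j, (∑ b ∈ B, (if inc b i then (1 : ℚ) else 0) * (if inc b j then 1 else 0))
      = (if i = j then (r : ℚ) - l else 0) + l := by
    intro i j
    have h1 : ∀ b, (if inc b i then (1 : ℚ) else 0) * (if inc b j then 1 else 0)
        = if inc b i ∧ inc b j then 1 else 0 := by
      intro b; by_cases h : inc b i <;> by_cases h' : inc b j <;> simp [h, h']
    simp only [h1, Finset.sum_boole]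
    by_cases h : i = j
    · subst h; simp [hr]
    · simp [h, hl i j h]
  have li : LinearIndependent ℚ
      (fun (i : ι) (b : B) => if inc b i then (1 : ℚ) else 0) := by
    rw [Fintype.linearIndependent_iff]
    intro c hc
    have hz : ∀ b ∈ B, ∑ i, c i * (if inc b i then (1 : ℚ) else 0) = 0 := by
      intro b hb
      have := congrFun hc ⟨b, hb⟩
      simpa [Finset.sum_apply] using this
    have e : ∑ b ∈ B, (∑ i, c i * (if inc b i then (1 : ℚ) else 0)) ^ 2
        = ((r : ℚ) - l) * ∑ i, c i ^ 2 + l * (∑ i, c i) ^ 2 := by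
      calc _ = ∑ i, ∑ j, c i * c j *
            ∑ b ∈ B, (if inc b i then (1 : ℚ) else 0) * (if inc b j then 1 else 0) := by
              simp_rw [sq, Finset.sum_mul_sum]
              rw [Finset.sum_comm]
              refine Finset.sum_congr rfl fun i _ => ?_
              rw [Finset.sum_comm]
              refine Finset.sum_congr rfl fun j _ => ?_
              rw [Finset.mul_sum]
              exact Finset.sum_congr rfl fun b _ => mul_mul_mul_comm _ _ _ _
        _ = ∑ i, ∑ j, c i * c j * ((if i = j then (r : ℚ) - l else 0) + l) :=
              Finset.sum_congr rfl fun i _ => Finset.sum_congr rfl fun j _ => by rw [gram]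
        _ = _ := by
              simp only [mul_add, Finset.sum_add_distrib, mul_ite, mul_zero,
                Finset.sum_ite_eq, Finset.mem_univ, if_true]
              rw [sq (∑ i, c i), Finset.sum_mul_sum, Finset.mul_sum, Finset.mul_sum]
              congr 1
              · exact Finset.sum_congr rfl fun i _ => by ring
              · refine Finset.sum_congr rfl fun i _ => ?_
                rw [Finset.mul_sum]
                exact Finset.sum_congr rfl fun j _ => by ring
    rw [Finset.sum_eq_zero (fun b hb => by rw [hz b hb]; norm_num)] at e
    have hpos : (0 : ℚ) < (r : ℚ) - l := by
      have : (l : ℚ) < r := by exact_mod_cast hlr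
      linarith
    have hl0 : (0 : ℚ) ≤ l * (∑ i, c i) ^ 2 := by positivity
    have hs : 0 ≤ ∑ i, c i ^ 2 := Finset.sum_nonneg fun i _ => sq_nonneg _
    have hs0 : ∑ i, c i ^ 2 = 0 := by nlinarith
    intro i
    have := (Finset.sum_eq_zero_iff_of_nonneg (fun i _ => sq_nonneg (c i))).1 hs0 i
      (Finset.mem_univ i)
    simpa using this
  simpa using li.fintype_card_le_finrank

namespace CTC

/-- The vertex obtained from `α` by applying `f` at the coordinates in `T`. For `f` the
transposition of a two-letter alphabet, this changes `α` exactly at `T`. -/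
def flipAt {m : ℕ} {Q : Type*} (f : Q → Q) (T : Finset (Fin m)) (α : Fin m → Q) : Fin m → Q :=
  fun i => if i ∈ T then f (α i) else α i

section

variable {m : ℕ} {Q : Type*} [DecidableEq Q] {f : Q → Q}

/-- Moving from `α` to `flipAt f T α` raises the distance to `γ` by one for each coordinate in `T`
where `γ` agrees with `α`, and lowers it by one for each where they differ. The hypothesis `hf` is
how `|Q| = 2` enters: `f` swaps the two letters. -/
lemma hammingDist_flip (hf : ∀ x y, y ≠ x ↔ y = f x) (T : Finset (Fin m)) (α γ : Fin m → Q) :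
    hammingDist (flipAt f T α) γ + 2 * (T.filter fun i => γ i ≠ α i).card
      = hammingDist α γ + T.card := by
  have e1 : (T.filter fun i => γ i ≠ α i).card
      = ∑ i, if i ∈ T ∧ γ i ≠ α i then 1 else 0 := by
    rw [Finset.sum_boole, Nat.cast_id]
    congr 1; ext i; simp
  have e2 : T.card = ∑ i, if i ∈ T then 1 else 0 := by simp
  rw [e1, e2]
  simp only [hammingDist, Finset.card_filter, Finset.mul_sum, ← Finset.sum_add_distrib]
  refine Finset.sum_congr rfl fun i _ => ?_
  by_cases hT : i ∈ T
  · by_cases h : γ i = α i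
    · have : f (α i) ≠ α i := ((hf (α i) (f (α i))).2 rfl)
      simp [flipAt, hT, h, this]
    · have h' : γ i = f (α i) := (hf _ _).1 h
      have := ne_comm.1 h
      simp [flipAt, hT, ← h', h, this]
  · simp [flipAt, hT]

lemma hammingDist_flip_self (hf : ∀ x y, y ≠ x ↔ y = f x) (T : Finset (Fin m))
    (α : Fin m → Q) : hammingDist (flipAt f T α) α = T.card := by
  simpa using hammingDist_flip hf T α α

variable {C : Set (Fin m → Q)} {δ : ℕ} {α : Fin m → Q}

/-- Any codeword other than `α` is at distance at least `δ - 2 ≥ 3` from `flipAt f T α`, so `α`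
is a nearest codeword. -/
lemma distTo_flip (hf : ∀ x y, y ≠ x ↔ y = f x) (hδ : IsMinDist C δ) (hδ5 : 5 ≤ δ)
    (hα : α ∈ C) (T : Finset (Fin m)) (hT : T.card ≤ 2) :
    distTo C (flipAt f T α) = T.card := by
  refine IsLeast.csInf_eq ⟨⟨α, hα, hammingDist_flip_self hf T α⟩, ?_⟩
  rintro d ⟨β, hβ, rfl⟩
  by_cases h : α = β
  · subst h; exact (hammingDist_flip_self hf T α).ge
  · have h1 : δ ≤ hammingDist α β := hδ.2 ⟨α, hα, β, hβ, h, rfl⟩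
    have h2 := hammingDist_triangle α (flipAt f T α) β
    rw [hammingDist_comm α (flipAt f T α), hammingDist_flip_self hf] at h2
    omega

/-- The codewords at distance `δ - |T|` from the flipped vertex are the blocks containing `T`: every
other codeword distinct from `α` is farther away, and `α` itself is excluded as `δ ≠ 2|T|`. -/
lemma sphere_flip (hf : ∀ x y, y ≠ x ↔ y = f x) (hδ : IsMinDist C δ) (hδ5 : 5 ≤ δ)
    (hα : α ∈ C) (T : Finset (Fin m)) (hT : T.card ≤ 2) :
    sphere (flipAt f T α) (δ - T.card) ∩ C
      = {γ | γ ∈ C ∧ hammingDist α γ = δ ∧ ∀ i ∈ T, γ i ≠ α i} := by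
  ext γ
  have h1 := hammingDist_flip hf T α γ
  have h2 : (T.filter fun i => γ i ≠ α i).card ≤ T.card := Finset.card_filter_le _ _
  simp only [sphere, Set.mem_inter_iff, Set.mem_ofPred_eq]
  rw [← Finset.card_filter_eq_iff]
  constructor
  · rintro ⟨hd, hγ⟩
    have h3 : α ≠ γ := by
      rintro rfl
      rw [hammingDist_flip_self hf] at hd
      omega
    have h4 : δ ≤ hammingDist α γ := hδ.2 ⟨α, hα, γ, hγ, h3, rfl⟩
    exact ⟨hγ, by omega, by omega⟩
  · rintro ⟨hγ, hd, hc⟩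
    exact ⟨by omega, hγ⟩

/-- The minimum-distance codewords around `α` form a 2-design (and a 1-design). -/
lemma ncard_blocks_eq [Fintype Q] (hf : ∀ x y, y ≠ x ↔ y = f x) (hδ : IsMinDist C δ)
    (hδ5 : 5 ≤ δ) (hδm : δ < m) (hcr : IsCR C) (hα : α ∈ C) (S T : Finset (Fin m))
    (hST : S.card = T.card) (hT : T.card ≤ 2) :
    {γ | γ ∈ C ∧ hammingDist α γ = δ ∧ ∀ i ∈ S, γ i ≠ α i}.ncard
      = {γ | γ ∈ C ∧ hammingDist α γ = δ ∧ ∀ i ∈ T, γ i ≠ α i}.ncard := by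
  have hbd : BddAbove {e | ∃ γ, distTo C γ = e} := (Set.finite_range (distTo C)).bddAbove
  have hρ : T.card ≤ covRad C := le_csSup hbd ⟨_, distTo_flip hf hδ hδ5 hα T hT⟩
  rw [← sphere_flip hf hδ hδ5 hα S (hST ▸ hT), ← sphere_flip hf hδ hδ5 hα T hT, hST]
  refine hcr T.card hρ _ (by omega) _ ?_ _ ?_
  · exact (distTo_flip hf hδ hδ5 hα S (hST ▸ hT)).trans hST
  · exact distTo_flip hf hδ hδ5 hα T hT

end

end CTC

open CTC in
/-- Lemma 2.14: a binary completely regular code with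
`5 ≤ δ < m` has at least `m + 1` codewords. -/
theorem statement12 {m : ℕ} {Q : Type*} [Fintype Q] [DecidableEq Q]
    (hm : 2 ≤ m) (hcard : Fintype.card Q = 2)
    (C : Set (Fin m → Q)) (hC : 2 ≤ C.ncard)
    (δ : ℕ) (hδ : IsMinDist C δ) (hδ5 : 5 ≤ δ) (hδm : δ < m)
    (hcr : IsCR C) :
    m + 1 ≤ C.ncard := by
  classical
  obtain ⟨f, hf⟩ : ∃ f : Q → Q, ∀ x y, y ≠ x ↔ y = f x := by
    obtain ⟨e⟩ := Fintype.truncEquivOfCardEq (hcard.trans (Fintype.card_fin 2).symm)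
    refine ⟨fun x => e.symm (e x + 1), fun x y => ?_⟩
    rw [Equiv.eq_symm_apply, ne_eq, ← e.apply_eq_iff_eq]
    generalize e x = a
    generalize e y = b
    revert a b
    decide
  obtain ⟨α, hα, β, hβ, hαβ, hd⟩ := hδ.1
  let B : Finset (Fin m → Q) := Finset.univ.filter fun γ => γ ∈ C ∧ hammingDist α γ = δ
  have hβB : β ∈ B := by simp [B, hβ, hd]
  have card_blocks : ∀ T : Finset (Fin m), (B.filter fun γ => ∀ i ∈ T, γ i ≠ α i).card
      = {γ | γ ∈ C ∧ hammingDist α γ = δ ∧ ∀ i ∈ T, γ i ≠ α i}.ncard := by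
    intro T
    rw [← Set.ncard_coe_finset]
    congr 1
    ext γ
    simp [B, and_assoc]
  have design : ∀ S T : Finset (Fin m), S.card = T.card → T.card ≤ 2 →
      (B.filter fun γ => ∀ i ∈ S, γ i ≠ α i).card
        = (B.filter fun γ => ∀ i ∈ T, γ i ≠ α i).card := by
    intro S T hST hT
    rw [card_blocks, card_blocks]
    exact ncard_blocks_eq hf hδ hδ5 hδm hcr hα S T hST hT
  obtain ⟨x, hx⟩ : ∃ x, β x ≠ α x := Function.ne_iff.1 hαβ.symm
  obtain ⟨y, hy⟩ : ∃ y, β y = α y := by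
    by_contra! h
    have : hammingDist α β = m := by
      simp [hammingDist, Finset.filter_true_of_mem fun i _ => (h i).symm]
    omega
  have hxy : x ≠ y := by rintro rfl; exact hx hy
  have hB : m ≤ B.card := by
    have := fisher B (fun γ i => γ i ≠ α i) (B.filter fun γ => γ x ≠ α x).card
      (B.filter fun γ => γ x ≠ α x ∧ γ y ≠ α y).card ?_ ?_ ?_
    · simpa using this
    · intro i
      simpa using design {i} {x} (by simp) (by simp)
    · intro i j hij
      have h := design {i, j} {x, y} (by simp [hij, hxy]) (by simp [hxy])
      simpa using h
    · -- the block `β` contains `x` but not `y`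
      refine Finset.card_lt_card (Finset.ssubset_iff_of_subset ?_ |>.2 ⟨β, ?_, ?_⟩)
      · intro γ hγ
        rw [Finset.mem_filter] at hγ ⊢
        exact ⟨hγ.1, hγ.2.1⟩
      · exact Finset.mem_filter.2 ⟨hβB, hx⟩
      · simp [hy]
  have hαB : α ∉ B := by
    simp only [B, Finset.mem_filter, hammingDist_self]
    omega
  calc m + 1 ≤ (insert α B).card := by rw [Finset.card_insert_of_notMem hαB]; omega
    _ = (↑(insert α B) : Set (Fin m → Q)).ncard := (Set.ncard_coe_finset _).symm
    _ ≤ C.ncard := by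
      refine Set.ncard_le_ncard ?_ C.toFinite
      intro γ hγ
      rcases Finset.mem_insert.1 (Finset.mem_coe.1 hγ) with rfl | h
      · exact hα
      · exact (Finset.mem_filter.1 h).2.1
end
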